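/- With the same notation, the p-th moments of the empirical measures μ̂^N are equi-integrable if and only if the p-th moments of the piecewise-constant measures μ^N are equi-integrable; consequently, for μ ∈ 𝒫_p(ℝ), W_p(μ̂^N, μ) → 0 if and only if W_p(μ^N, μ) → 0. -/

import Mathlib

open Set MeasureTheory Filter
open scoped ENNReal NNReal Topology

/-- The cone `𝒦_N` of `N+1` ordered particles with consecutive gaps at least `1/(N M)`. -/
def InCone (N : ℕ) (M : ℝ) (x : Fin (N+1) → ℝ) : Prop :=
  ∀ i : Fin N, x i.castSucc + 1 / (N * M) ≤ x i.succ

/-- The empirical measure `(N+1)⁻¹ ∑_i δ_{x_i}`. -/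
noncomputable def empMeas (N : ℕ) (x : Fin (N+1) → ℝ) : Measure ℝ :=
  ((N : ℝ≥0∞) + 1)⁻¹ • ∑ i : Fin (N+1), Measure.dirac (x i)

/-- The piecewise-constant measure `∑_{i<N} (N Δx_i)⁻¹ 𝟙_{[x_i,x_{i+1})} ℒ¹`. -/
noncomputable def pcMeas (N : ℕ) (x : Fin (N+1) → ℝ) : Measure ℝ :=
  ∑ i : Fin N, (ENNReal.ofReal (1 / (N * (x i.succ - x i.castSucc)))) •
    volume.restrict (Ico (x i.castSucc) (x i.succ))

/-- Equi-integrability of the `p`-th moments of a sequence of measures. -/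
def EquiIntMoments (p : ℝ) (μ : ℕ → Measure ℝ) : Prop :=
  ∀ ε : ℝ, 0 < ε → ∃ L : ℝ, 0 < L ∧
    limsup (fun N => ∫⁻ y in {y : ℝ | L < |y|}, ENNReal.ofReal (|y| ^ p) ∂(μ N)) atTop
      < ENNReal.ofReal ε

/-- The `p`-Wasserstein transport cost `W_p(μ,ν)^p`. -/
noncomputable def WpCost (p : ℝ) (μ ν : Measure ℝ) : ℝ≥0∞ :=
  sInf {c | ∃ π : Measure (ℝ × ℝ), IsProbabilityMeasure π ∧
    π.map Prod.fst = μ ∧ π.map Prod.snd = ν ∧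
    c = ∫⁻ q, ENNReal.ofReal (|q.1 - q.2| ^ p) ∂π}

/-!
Any transport plan bounds the tail of one measure by its cost plus the tail of the other, because
`|y| > 2 L` forces `|z| > |y| / 2` or `|y - z| ≥ |y| / 2`. Hence equi-integrability passes along
sequences whose transport cost tends to zero, and in particular from a fixed `μ ∈ 𝒫_p(ℝ)` to every
sequence converging to it.

Splitting the mass of each cell between its two endpoints transports `μ^N` to `μ̂^N` at cost at most
the mean of `(x_{i+1} - x_i)^p`. Inside `[-L, L]` this mean is negligible, as the gaps there have
total length at most `2 L`. A large gap not accounted for by its part in `[-L, L]` has an endpoint,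
and half of its mass, at a distance from the origin comparable to its length, so it is paid for by
the tail of either measure. Consequently the cost between `μ^N` and `μ̂^N` tends to zero as soon as
one of the two sequences is equi-integrable.
-/

open ProbabilityTheory

section PowerInequalities

lemma ofReal_abs_rpow {p : ℝ} (hp : 0 ≤ p) (y : ℝ) : ENNReal.ofReal (|y| ^ p) = ‖y‖ₑ ^ p := by
  rw [← ENNReal.ofReal_rpow_of_nonneg (abs_nonneg y) hp, Real.enorm_eq_ofReal_abs]

lemma add_rpow_le_two_rpow_mul {p : ℝ} (hp : 0 ≤ p) (a b : ℝ≥0∞) :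
    (a + b) ^ p ≤ 2 ^ p * (a ^ p + b ^ p) := by
  calc (a + b) ^ p ≤ (2 * max a b) ^ p := by
        gcongr
        rw [two_mul]
        exact add_le_add (le_max_left a b) (le_max_right a b)
    _ = 2 ^ p * max (a ^ p) (b ^ p) := by
        rw [ENNReal.mul_rpow_of_nonneg _ _ hp, (ENNReal.monotone_rpow_of_nonneg hp).map_max]
    _ ≤ 2 ^ p * (a ^ p + b ^ p) := by gcongr; exact max_le_add_of_nonneg zero_le zero_le

variable {ι : Type*} [Fintype ι]

lemma sum_rpow_le_rpow_of_one_le {p : ℝ} (hp : 1 ≤ p) {v : ι → ℝ≥0∞} {R : ℝ≥0∞}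
    (hv : ∑ i, v i ≤ R) : ∑ i, v i ^ p ≤ R ^ p := by
  have rpow_eq_mul (t : ℝ≥0∞) : t ^ p = t ^ (p - 1) * t := by
    simpa using ENNReal.rpow_add_of_nonneg (x := t) (p - 1) 1 (sub_nonneg.2 hp) zero_le_one
  calc ∑ i, v i ^ p = ∑ i, v i ^ (p - 1) * v i := by simp only [rpow_eq_mul]
    _ ≤ ∑ i, R ^ (p - 1) * v i := by
        gcongr with i
        exact (Finset.single_le_sum (fun _ _ => zero_le) (Finset.mem_univ i)).trans hv
    _ ≤ R ^ (p - 1) * R := by rw [← Finset.mul_sum]; gcongr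
    _ = R ^ p := (rpow_eq_mul R).symm

lemma mean_rpow_le_rpow_mean [Nonempty ι] {p : ℝ} (hp : 0 < p) (hp1 : p ≤ 1) (v : ι → ℝ≥0∞) :
    (Fintype.card ι : ℝ≥0∞)⁻¹ * ∑ i, v i ^ p ≤ ((Fintype.card ι : ℝ≥0∞)⁻¹ * ∑ i, v i) ^ p := by
  have hw : ∑ _i : ι, (Fintype.card ι : ℝ≥0∞)⁻¹ = 1 := by
    simp [ENNReal.mul_inv_cancel]
  have := ENNReal.rpow_arith_mean_le_arith_mean_rpow Finset.univ _ (fun i => v i ^ p) hw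
    ((one_le_inv₀ hp).2 hp1)
  rw [ENNReal.rpow_inv_le_iff hp] at this
  simpa only [Finset.mul_sum, ENNReal.rpow_rpow_inv hp.ne'] using this

lemma mean_rpow_le_of_sum_le [Nonempty ι] {p : ℝ} (hp : 0 < p) {v : ι → ℝ≥0∞} {R : ℝ≥0∞}
    (hv : ∑ i, v i ≤ R) :
    (Fintype.card ι : ℝ≥0∞)⁻¹ * ∑ i, v i ^ p ≤
      (Fintype.card ι : ℝ≥0∞)⁻¹ ^ min p 1 * R ^ p := by
  rcases le_total p 1 with hp1 | hp1
  · rw [min_eq_left hp1, ← ENNReal.mul_rpow_of_nonneg _ _ hp.le]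
    refine (mean_rpow_le_rpow_mean hp hp1 v).trans ?_
    gcongr
  · rw [min_eq_right hp1, ENNReal.rpow_one]
    gcongr
    exact sum_rpow_le_rpow_of_one_le hp1 hv

end PowerInequalities

section Couplings

variable {α β γ : Type*} [MeasurableSpace α] [MeasurableSpace β] [MeasurableSpace γ]

/-- `π` is a coupling (transport plan) of `μ` and `ν`: a probability measure on the product with
first marginal `μ` and second marginal `ν`. -/
structure IsCoupling (π : Measure (α × β)) (μ : Measure α) (ν : Measure β) : Prop where
  isProbabilityMeasure : IsProbabilityMeasure π
  map_fst : π.map Prod.fst = μ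
  map_snd : π.map Prod.snd = ν

namespace IsCoupling

variable {μ : Measure α} {ν : Measure β} {ρ : Measure γ}

lemma swap {π : Measure (α × β)} (h : IsCoupling π μ ν) : IsCoupling (π.map Prod.swap) ν μ := by
  have := h.isProbabilityMeasure
  refine ⟨Measure.isProbabilityMeasure_map (by fun_prop), ?_, ?_⟩
  · rw [Measure.map_map (by fun_prop) (by fun_prop), ← h.map_snd]; rfl
  · rw [Measure.map_map (by fun_prop) (by fun_prop), ← h.map_fst]; rfl

lemma exists_gluing [StandardBorelSpace γ] [Nonempty γ] {π₁ : Measure (α × β)}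
    {π₂ : Measure (β × γ)} (h₁ : IsCoupling π₁ μ ν) (h₂ : IsCoupling π₂ ν ρ) :
    ∃ Θ : Measure ((α × β) × γ), IsProbabilityMeasure Θ ∧
      Θ.map Prod.fst = π₁ ∧ Θ.map (fun q => (q.1.2, q.2)) = π₂ := by
  have := h₁.isProbabilityMeasure
  have := h₂.isProbabilityMeasure
  have shared_marginal : π₁.map Prod.snd = π₂.fst := h₁.map_snd.trans h₂.map_fst.symm
  refine ⟨π₁ ⊗ₘ Kernel.prodMkLeft α π₂.condKernel, inferInstance, Measure.fst_compProd _ _, ?_⟩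
  conv_rhs => rw [← π₂.disintegrate π₂.condKernel, ← shared_marginal]
  refine Measure.ext_of_lintegral _ fun f hf => ?_
  rw [lintegral_map hf (by fun_prop), Measure.lintegral_compProd (by fun_prop),
    Measure.lintegral_compProd hf, lintegral_map (by fun_prop) measurable_snd]
  simp only [Kernel.prodMkLeft_apply]

end IsCoupling

/-- The cost `∫ d(y, z)^p dπ` of a transport plan `π`. -/
noncomputable def transportCost {X : Type*} [EDist X] [MeasurableSpace X] (p : ℝ)
    (π : Measure (X × X)) : ℝ≥0∞ :=
  ∫⁻ q, edist q.1 q.2 ^ p ∂π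

lemma transportCost_swap {X : Type*} [PseudoEMetricSpace X] [MeasurableSpace X] (p : ℝ)
    (π : Measure (X × X)) : transportCost p (π.map Prod.swap) = transportCost p π := by
  refine (lintegral_map_equiv _ MeasurableEquiv.prodComm).trans ?_
  exact lintegral_congr fun q => congrArg (· ^ p) (edist_comm q.2 q.1)

lemma transportCost_le_of_ae_edist_le {X : Type*} [EDist X] [MeasurableSpace X] {p : ℝ}
    (hp : 0 ≤ p) {π : Measure (X × X)} [IsProbabilityMeasure π] {r : ℝ≥0∞}
    (h : ∀ᵐ q ∂π, edist q.1 q.2 ≤ r) : transportCost p π ≤ r ^ p := by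
  calc transportCost p π ≤ ∫⁻ _, r ^ p ∂π :=
        lintegral_mono_ae (h.mono fun q hq => ENNReal.rpow_le_rpow hq hp)
    _ = r ^ p := by simp

variable {p : ℝ} {μ ν ρ : Measure ℝ}

lemma transportCost_eq_lintegral_ofReal (hp : 0 ≤ p) (π : Measure (ℝ × ℝ)) :
    transportCost p π = ∫⁻ q, ENNReal.ofReal (|q.1 - q.2| ^ p) ∂π := by
  simp only [transportCost, ofReal_abs_rpow hp, edist_eq_enorm_sub]

lemma WpCost_le_transportCost (hp : 0 ≤ p) {π : Measure (ℝ × ℝ)} (h : IsCoupling π μ ν) :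
    WpCost p μ ν ≤ transportCost p π :=
  sInf_le ⟨π, h.isProbabilityMeasure, h.map_fst, h.map_snd,
    transportCost_eq_lintegral_ofReal hp π⟩

lemma le_WpCost (hp : 0 ≤ p) {t : ℝ≥0∞} (h : ∀ π, IsCoupling π μ ν → t ≤ transportCost p π) :
    t ≤ WpCost p μ ν := by
  refine le_sInf ?_
  rintro _ ⟨π, hπ, hfst, hsnd, rfl⟩
  exact (h π ⟨hπ, hfst, hsnd⟩).trans_eq (transportCost_eq_lintegral_ofReal hp π)

lemma le_mul_WpCost_add (hp : 0 ≤ p) {K t d : ℝ≥0∞} (hK : K ≠ 0) (hK' : K ≠ ⊤)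
    (h : ∀ π, IsCoupling π μ ν → t ≤ K * (transportCost p π + d)) :
    t ≤ K * (WpCost p μ ν + d) := by
  rw [← ENNReal.div_le_iff' hK hK', ← tsub_le_iff_right]
  refine le_WpCost hp fun π hπ => ?_
  rw [tsub_le_iff_right, ENNReal.div_le_iff' hK hK']
  exact h π hπ

lemma WpCost_comm (hp : 0 ≤ p) : WpCost p μ ν = WpCost p ν μ := by
  have swap_le (μ ν : Measure ℝ) : WpCost p μ ν ≤ WpCost p ν μ :=
    le_WpCost hp fun π hπ => (WpCost_le_transportCost hp hπ.swap).trans_eq (transportCost_swap p π)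
  exact le_antisymm (swap_le μ ν) (swap_le ν μ)

lemma WpCost_le_of_couplings (hp : 0 ≤ p) {π₁ π₂ : Measure (ℝ × ℝ)} (h₁ : IsCoupling π₁ μ ν)
    (h₂ : IsCoupling π₂ ν ρ) :
    WpCost p μ ρ ≤ 2 ^ p * (transportCost p π₁ + transportCost p π₂) := by
  obtain ⟨Θ, hΘ, hΘ₁, hΘ₂⟩ := h₁.exists_gluing h₂
  have hΘ₁₂ : IsCoupling (Θ.map fun q => (q.1.1, q.2)) μ ρ := by
    refine ⟨Measure.isProbabilityMeasure_map (by fun_prop), ?_, ?_⟩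
    · rw [← h₁.map_fst, ← hΘ₁, Measure.map_map (by fun_prop) (by fun_prop),
        Measure.map_map (by fun_prop) (by fun_prop)]
      rfl
    · rw [← h₂.map_snd, ← hΘ₂, Measure.map_map (by fun_prop) (by fun_prop),
        Measure.map_map (by fun_prop) (by fun_prop)]
      rfl
  calc WpCost p μ ρ ≤ ∫⁻ q, edist q.1 q.2 ^ p ∂(Θ.map fun q => (q.1.1, q.2)) :=
        WpCost_le_transportCost hp hΘ₁₂
    _ = ∫⁻ q, edist q.1.1 q.2 ^ p ∂Θ := lintegral_map (by fun_prop) (by fun_prop)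
    _ ≤ ∫⁻ q, 2 ^ p * (edist q.1.1 q.1.2 ^ p + edist q.1.2 q.2 ^ p) ∂Θ := by
        refine lintegral_mono fun q => le_trans ?_ (add_rpow_le_two_rpow_mul hp _ _)
        gcongr
        exact edist_triangle _ _ _
    _ = 2 ^ p * (∫⁻ q, edist q.1.1 q.1.2 ^ p ∂Θ + ∫⁻ q, edist q.1.2 q.2 ^ p ∂Θ) := by
        rw [lintegral_const_mul _ (by fun_prop), lintegral_add_left (by fun_prop)]
    _ = 2 ^ p * (transportCost p π₁ + transportCost p π₂) := by
        rw [transportCost, transportCost, ← hΘ₁, ← hΘ₂, lintegral_map (by fun_prop) (by fun_prop),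
          lintegral_map (by fun_prop) (by fun_prop)]

lemma WpCost_le_two_rpow_mul_add (hp : 0 ≤ p) :
    WpCost p μ ρ ≤ 2 ^ p * (WpCost p μ ν + WpCost p ν ρ) := by
  have h0 : (2 : ℝ≥0∞) ^ p ≠ 0 := by simp
  have htop : (2 : ℝ≥0∞) ^ p ≠ ⊤ := ENNReal.rpow_ne_top_of_nonneg hp (by simp)
  refine le_mul_WpCost_add hp h0 htop fun π₁ h₁ => ?_
  rw [add_comm]
  refine le_mul_WpCost_add hp h0 htop fun π₂ h₂ => ?_
  rw [add_comm]
  exact WpCost_le_of_couplings hp h₁ h₂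

lemma tendsto_WpCost_trans (hp : 0 ≤ p) {ι : Type*} {l : Filter ι} {μ ν ρ : ι → Measure ℝ}
    (h₁ : Tendsto (fun n => WpCost p (μ n) (ν n)) l (𝓝 0))
    (h₂ : Tendsto (fun n => WpCost p (ν n) (ρ n)) l (𝓝 0)) :
    Tendsto (fun n => WpCost p (μ n) (ρ n)) l (𝓝 0) := by
  have htop : (2 : ℝ≥0∞) ^ p ≠ ⊤ := ENNReal.rpow_ne_top_of_nonneg hp (by simp)
  have upper := ENNReal.Tendsto.const_mul (h₁.add h₂) (Or.inr htop)
  rw [add_zero, mul_zero] at upper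
  exact tendsto_of_tendsto_of_tendsto_of_le_of_le tendsto_const_nhds upper
    (fun _ => zero_le) fun _ => WpCost_le_two_rpow_mul_add hp

end Couplings

section Tails

variable {p L : ℝ}

/-- The tail `|y|^p 𝟙_{|y| > L}` of the `p`-th power, as an extended nonnegative function, so that
`∫⁻ y, tailPow p L y ∂μ` is the `p`-th moment of `μ` outside `[-L, L]`. -/
noncomputable def tailPow (p L : ℝ) : ℝ → ℝ≥0∞ :=
  {y : ℝ | L < |y|}.indicator fun y => ‖y‖ₑ ^ p

lemma tailPow_of_lt {y : ℝ} (h : L < |y|) : tailPow p L y = ‖y‖ₑ ^ p := by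
  simp [tailPow, h]

lemma tailPow_of_le {y : ℝ} (h : |y| ≤ L) : tailPow p L y = 0 := by
  simp [tailPow, h]

lemma measurableSet_lt_abs (L : ℝ) : MeasurableSet {y : ℝ | L < |y|} :=
  measurableSet_lt measurable_const (by fun_prop)

@[fun_prop]
lemma measurable_tailPow (p L : ℝ) : Measurable (tailPow p L) :=
  Measurable.indicator (by fun_prop) (measurableSet_lt_abs L)

lemma setLIntegral_ofReal_abs_rpow (hp : 0 ≤ p) (μ : Measure ℝ) :
    ∫⁻ y in {y : ℝ | L < |y|}, ENNReal.ofReal (|y| ^ p) ∂μ = ∫⁻ y, tailPow p L y ∂μ := by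
  simp only [ofReal_abs_rpow hp]
  exact (lintegral_indicator (measurableSet_lt_abs L) _).symm

lemma tailPow_two_mul_le (hp : 0 ≤ p) (y z : ℝ) :
    tailPow p (2 * L) y ≤ 2 ^ p * (edist y z ^ p + tailPow p L z) := by
  rcases le_or_gt |y| (2 * L) with hy | hy
  · simp [tailPow_of_le hy]
  have le_of_half_le {t : ℝ} (ht : |y| ≤ 2 * |t|) : ‖y‖ₑ ^ p ≤ 2 ^ p * ‖t‖ₑ ^ p := by
    rw [← ENNReal.mul_rpow_of_nonneg _ _ hp]
    gcongr
    rw [Real.enorm_eq_ofReal_abs, Real.enorm_eq_ofReal_abs, ← ENNReal.ofReal_ofNat 2,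
      ← ENNReal.ofReal_mul zero_le_two]
    exact ENNReal.ofReal_le_ofReal ht
  rw [tailPow_of_lt hy]
  rcases le_total |y| (2 * |z|) with hz | hz
  · rw [tailPow_of_lt (by linarith)]
    exact (le_of_half_le hz).trans (by gcongr; exact le_add_self)
  · have hyz : |y| ≤ 2 * |y - z| := by linarith [abs_sub_abs_le_abs_sub y z]
    rw [edist_eq_enorm_sub]
    exact (le_of_half_le hyz).trans (by gcongr; exact le_self_add)

lemma lintegral_tailPow_le_WpCost_add (hp : 0 ≤ p) (μ ν : Measure ℝ) :
    ∫⁻ y, tailPow p (2 * L) y ∂μ ≤ 2 ^ p * (WpCost p μ ν + ∫⁻ y, tailPow p L y ∂ν) := by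
  refine le_mul_WpCost_add hp (by simp) (ENNReal.rpow_ne_top_of_nonneg hp (by simp)) fun π hπ => ?_
  calc ∫⁻ y, tailPow p (2 * L) y ∂μ = ∫⁻ q, tailPow p (2 * L) q.1 ∂π := by
        rw [← hπ.map_fst, lintegral_map (by fun_prop) (by fun_prop)]
    _ ≤ ∫⁻ q, 2 ^ p * (edist q.1 q.2 ^ p + tailPow p L q.2) ∂π :=
        lintegral_mono fun q => tailPow_two_mul_le hp q.1 q.2
    _ = 2 ^ p * (transportCost p π + ∫⁻ q, tailPow p L q.2 ∂π) := by
        rw [lintegral_const_mul _ (by fun_prop), lintegral_add_left (by fun_prop), transportCost]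
    _ = 2 ^ p * (transportCost p π + ∫⁻ y, tailPow p L y ∂ν) := by
        rw [← hπ.map_snd, lintegral_map (by fun_prop) (by fun_prop)]

lemma tendsto_lintegral_tailPow_atTop {μ : Measure ℝ} (hμ : ∫⁻ y, ‖y‖ₑ ^ p ∂μ ≠ ⊤) :
    Tendsto (fun L => ∫⁻ y, tailPow p L y ∂μ) atTop (𝓝 0) := by
  have tail_eventually_zero (y : ℝ) : Tendsto (fun L => tailPow p L y) atTop (𝓝 0) :=
    tendsto_const_nhds.congr' <| (eventually_ge_atTop |y|).mono fun L hL => (tailPow_of_le hL).symm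
  simpa using tendsto_lintegral_filter_of_dominated_convergence (fun y => ‖y‖ₑ ^ p)
    (Eventually.of_forall fun L => measurable_tailPow p L)
    (Eventually.of_forall fun L => ae_of_all μ fun y => indicator_le_self _ _ y) hμ
    (ae_of_all μ tail_eventually_zero)

end Tails

section EquiIntegrability

variable {p : ℝ} {μ ν : ℕ → Measure ℝ}

lemma equiIntMoments_iff (hp : 0 ≤ p) :
    EquiIntMoments p μ ↔ ∀ ε : ℝ≥0∞, 0 < ε →
      ∃ L : ℝ, 0 < L ∧ ∀ᶠ N in atTop, ∫⁻ y, tailPow p L y ∂(μ N) ≤ ε := by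
  simp only [EquiIntMoments, setLIntegral_ofReal_abs_rpow hp]
  refine ⟨fun h ε hε => ?_, fun h ε hε => ?_⟩
  · obtain ⟨r, -, hr, hrε⟩ := ENNReal.lt_iff_exists_real_btwn.1 hε
    obtain ⟨L, hL, hlim⟩ := h r (ENNReal.ofReal_pos.1 hr)
    exact ⟨L, hL, (eventually_lt_of_limsup_lt hlim).mono fun N hN => (hN.trans hrε).le⟩
  · obtain ⟨δ, hδ, hδε⟩ := exists_between (ENNReal.ofReal_pos.2 hε)
    obtain ⟨L, hL, htail⟩ := h δ hδ
    exact ⟨L, hL, (limsup_le_of_le (by isBoundedDefault) htail).trans_lt hδε⟩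

lemma equiIntMoments_const (hp : 0 ≤ p) {μ : Measure ℝ} (hμ : ∫⁻ y, ‖y‖ₑ ^ p ∂μ ≠ ⊤) :
    EquiIntMoments p fun _ => μ := by
  refine (equiIntMoments_iff hp).2 fun ε hε => ?_
  obtain ⟨L, htail, hL⟩ := (((tendsto_lintegral_tailPow_atTop hμ).eventually_le_const hε).and
    (eventually_gt_atTop 0)).exists
  exact ⟨L, hL, Eventually.of_forall fun _ => htail⟩

namespace EquiIntMoments

lemma of_tendsto_WpCost (hp : 0 ≤ p) (hν : EquiIntMoments p ν)
    (h : Tendsto (fun N => WpCost p (μ N) (ν N)) atTop (𝓝 0)) : EquiIntMoments p μ := by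
  refine (equiIntMoments_iff hp).2 fun ε hε => ?_
  have htop : (2 : ℝ≥0∞) ^ p ≠ ⊤ := ENNReal.rpow_ne_top_of_nonneg hp (by simp)
  have hδ : 0 < ε / 2 ^ p / 2 := ENNReal.half_pos (ENNReal.div_pos hε.ne' htop).ne'
  obtain ⟨L, hL, htail⟩ := (equiIntMoments_iff hp).1 hν _ hδ
  refine ⟨2 * L, by positivity, ?_⟩
  filter_upwards [htail, h.eventually_le_const hδ] with N htailN hcostN
  calc ∫⁻ y, tailPow p (2 * L) y ∂(μ N)
      ≤ 2 ^ p * (WpCost p (μ N) (ν N) + ∫⁻ y, tailPow p L y ∂(ν N)) :=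
        lintegral_tailPow_le_WpCost_add hp _ _
    _ ≤ 2 ^ p * (ε / 2 ^ p / 2 + ε / 2 ^ p / 2) := by gcongr
    _ ≤ ε := by rw [ENNReal.add_halves]; exact ENNReal.mul_div_le

lemma tendsto_zero_of_le (hp : 0 ≤ p) (hν : EquiIntMoments p ν) {a : ℕ → ℝ≥0∞}
    {r : ℝ → ℕ → ℝ≥0∞} (hr : ∀ L, Tendsto (r L) atTop (𝓝 0)) {K : ℝ≥0∞} (hK : K ≠ ⊤)
    (h : ∀ L, ∀ᶠ N in atTop, a N ≤ K * (r L N + ∫⁻ y, tailPow p L y ∂(ν N))) :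
    Tendsto a atTop (𝓝 0) := by
  refine ENNReal.tendsto_nhds_zero.2 fun ε hε => ?_
  have hδ : 0 < ε / K / 2 := ENNReal.half_pos (ENNReal.div_pos hε.ne' hK).ne'
  obtain ⟨L, -, htail⟩ := (equiIntMoments_iff hp).1 hν _ hδ
  filter_upwards [h L, htail, (hr L).eventually_le_const hδ] with N hN htailN hrN
  calc a N ≤ K * (ε / K / 2 + ε / K / 2) := hN.trans (by gcongr)
    _ ≤ ε := by rw [ENNReal.add_halves]; exact ENNReal.mul_div_le

end EquiIntMoments

end EquiIntegrability

section GapBounds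

lemma volume_Ico_rpow_le_endpoints {p : ℝ} (hp : 0 ≤ p) (L a b : ℝ) :
    volume (Ico a b) ^ p ≤
      2 ^ p * (volume (Ico a b ∩ Icc (-L) L) ^ p + (tailPow p L a + tailPow p L b)) := by
  have le_of_le_two_mul {c : ℝ} (hc : b - a ≤ 2 * |c|) :
      volume (Ico a b) ^ p ≤ 2 ^ p * ‖c‖ₑ ^ p := by
    rw [← ENNReal.mul_rpow_of_nonneg _ _ hp, Real.volume_Ico, Real.enorm_eq_ofReal_abs,
      ← ENNReal.ofReal_ofNat 2, ← ENNReal.ofReal_mul zero_le_two]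
    gcongr
  have hab : b - a ≤ |a| + |b| := by linarith [neg_abs_le a, le_abs_self b]
  rcases le_or_gt (max |a| |b|) L with hL | hL
  · obtain ⟨ha, hb⟩ := max_le_iff.1 hL
    have hsub : Ico a b ⊆ Icc (-L) L :=
      Ico_subset_Icc_self.trans (Icc_subset_Icc (abs_le.1 ha).1 (abs_le.1 hb).2)
    rw [inter_eq_left.2 hsub]
    have one_le : (1 : ℝ≥0∞) ≤ 2 ^ p := by simpa using ENNReal.rpow_le_rpow one_le_two hp
    exact le_self_add.trans (le_mul_of_one_le_left' one_le)
  rcases le_total |a| |b| with h | h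
  · rw [max_eq_right h] at hL
    rw [tailPow_of_lt hL]
    refine (le_of_le_two_mul (c := b) (by linarith)).trans ?_
    gcongr
    rw [← add_assoc]
    exact le_add_self
  · rw [max_eq_left h] at hL
    rw [tailPow_of_lt hL, add_left_comm]
    refine (le_of_le_two_mul (c := a) (by linarith)).trans ?_
    gcongr
    exact le_self_add

lemma inv_two_le_cond_compl {Ω : Type*} [MeasurableSpace Ω] {μ : Measure Ω} {s t : Set Ω}
    (hs : MeasurableSet s) (ht : MeasurableSet t) (h0 : μ s ≠ 0) (htop : μ s ≠ ⊤)
    (h : μ (s ∩ t) ≤ μ s / 2) : 2⁻¹ ≤ μ[tᶜ | s] := by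
  have := cond_isProbabilityMeasure_of_finite h0 htop
  have hst : μ[t | s] ≤ 2⁻¹ := by
    rw [cond_apply hs]
    refine (mul_le_mul_right h _).trans_eq ?_
    rw [← mul_div_assoc, ENNReal.inv_mul_cancel h0 htop, one_div]
  rw [prob_compl_eq_one_sub ht, ← ENNReal.one_sub_inv_two]
  exact tsub_le_tsub_left hst 1

lemma volume_rpow_le_lintegral_tailPow_cond {p L : ℝ} (hp : 0 ≤ p) {s : Set ℝ}
    (hs : MeasurableSet s) (h0 : volume s ≠ 0) (htop : volume s ≠ ⊤)
    (h : volume (s ∩ Icc (-L) L) ≤ volume s / 2) :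
    volume s ^ p ≤ 2 * 4 ^ p * ∫⁻ y, tailPow p L y ∂volume[|s] := by
  set d := (volume s).toReal
  have hd : volume s = ENNReal.ofReal d := (ENNReal.ofReal_toReal htop).symm
  -- `[-d / 4, d / 4]` has length `d / 2`, so half of `s` lies farther than `d / 4` from the origin.
  obtain ⟨r, hLr, hdr, hr⟩ : ∃ r, L ≤ r ∧ d / 4 ≤ r ∧ volume (s ∩ Icc (-r) r) ≤ volume s / 2 := by
    rcases le_total (d / 4) L with hdL | hLd
    · exact ⟨L, le_rfl, hdL, h⟩
    · refine ⟨d / 4, hLd, le_rfl, (measure_mono inter_subset_right).trans_eq ?_⟩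
      rw [Real.volume_Icc, hd, ← ENNReal.ofReal_ofNat 2, ← ENNReal.ofReal_div_of_pos two_pos]
      congr 1
      ring
  have far_mass : 2⁻¹ ≤ volume[(Icc (-r) r)ᶜ | s] :=
    inv_two_le_cond_compl hs measurableSet_Icc h0 htop hr
  have le_tailPow {y : ℝ} (hy : y ∈ (Icc (-r) r)ᶜ) : (volume s / 4) ^ p ≤ tailPow p L y := by
    have hry : r < |y| := not_le.1 fun hle => hy (abs_le.1 hle)
    rw [tailPow_of_lt (hLr.trans_lt hry), hd, Real.enorm_eq_ofReal_abs, ← ENNReal.ofReal_ofNat 4,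
      ← ENNReal.ofReal_div_of_pos four_pos]
    gcongr
    exact hdr.trans hry.le
  have markov : (volume s / 4) ^ p * 2⁻¹ ≤ ∫⁻ y, tailPow p L y ∂volume[|s] :=
    calc (volume s / 4) ^ p * 2⁻¹
        ≤ (volume s / 4) ^ p * volume[{y | (volume s / 4) ^ p ≤ tailPow p L y} | s] := by
          gcongr
          exact far_mass.trans (measure_mono fun y hy => le_tailPow hy)
      _ ≤ _ := mul_meas_ge_le_lintegral (measurable_tailPow p L) _
  calc volume s ^ p = 2 * 4 ^ p * ((volume s / 4) ^ p * 2⁻¹) := by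
        rw [mul_comm (2 : ℝ≥0∞), mul_mul_mul_comm, ← ENNReal.mul_rpow_of_nonneg _ _ hp,
          ENNReal.mul_div_cancel four_ne_zero ENNReal.ofNat_ne_top,
          ENNReal.mul_inv_cancel two_ne_zero ENNReal.ofNat_ne_top, mul_one]
    _ ≤ _ := by gcongr

lemma volume_rpow_le_inter_add_lintegral_cond {p : ℝ} (hp : 0 ≤ p) (L : ℝ) {s : Set ℝ}
    (hs : MeasurableSet s) (h0 : volume s ≠ 0) (htop : volume s ≠ ⊤) :
    volume s ^ p ≤
      2 * 4 ^ p * (volume (s ∩ Icc (-L) L) ^ p + ∫⁻ y, tailPow p L y ∂volume[|s]) := by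
  rcases le_total (volume (s ∩ Icc (-L) L)) (volume s / 2) with hfar | hnear
  · exact (volume_rpow_le_lintegral_tailPow_cond hp hs h0 htop hfar).trans
      (by gcongr; exact le_add_self)
  · have hs2 : volume s ≤ 2 * volume (s ∩ Icc (-L) L) :=
      (ENNReal.div_le_iff' two_ne_zero ENNReal.ofNat_ne_top).1 hnear
    calc volume s ^ p ≤ (2 * volume (s ∩ Icc (-L) L)) ^ p := by gcongr
      _ = 1 * 2 ^ p * volume (s ∩ Icc (-L) L) ^ p := by
        rw [one_mul, ENNReal.mul_rpow_of_nonneg _ _ hp]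
      _ ≤ _ := by
        gcongr
        · exact one_le_two
        · norm_num
        · exact le_self_add

end GapBounds

section Particles

variable {N : ℕ} {x : Fin (N + 1) → ℝ} {p : ℝ}

lemma InCone.strictMono {M : ℝ} (hM : 0 < M) (h : InCone N M x) : StrictMono x := by
  refine Fin.strictMono_iff_lt_succ.2 fun i => ?_
  have hN : (0 : ℝ) < N := by exact_mod_cast i.pos
  have hgap : 0 < 1 / (N * M) := by positivity
  linarith [h i]

/-- The `i`-th cell `[x_i, x_{i+1})` of the partition cut out by the particles. -/
def cell (x : Fin (N + 1) → ℝ) (i : Fin N) : Set ℝ :=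
  Ico (x i.castSucc) (x i.succ)

lemma measurableSet_cell (i : Fin N) : MeasurableSet (cell x i) :=
  measurableSet_Ico

lemma volume_cell (i : Fin N) :
    volume (cell x i) = ENNReal.ofReal (x i.succ - x i.castSucc) :=
  Real.volume_Ico

lemma volume_cell_ne_zero (hx : StrictMono x) (i : Fin N) : volume (cell x i) ≠ 0 := by
  simpa [volume_cell] using hx i.castSucc_lt_succ

lemma volume_cell_ne_top (i : Fin N) : volume (cell x i) ≠ ⊤ := by
  simp [volume_cell]

lemma isProbabilityMeasure_cond_cell (hx : StrictMono x) (i : Fin N) :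
    IsProbabilityMeasure volume[|cell x i] :=
  cond_isProbabilityMeasure_of_finite (volume_cell_ne_zero hx i) (volume_cell_ne_top i)

lemma pairwise_disjoint_cell (hx : Monotone x) : Pairwise (Function.onFun Disjoint (cell x)) := by
  refine (pairwise_disjoint_on _).2 fun i j hij => ?_
  have hle : x i.succ ≤ x j.castSucc := hx (Fin.succ_le_castSucc_iff.2 hij)
  exact Ico_disjoint_Ico.2 ((min_le_left _ _).trans (hle.trans (le_max_right _ _)))

lemma sum_volume_cell_inter_le (hx : Monotone x) (s : Set ℝ) :
    ∑ i, volume (cell x i ∩ s) ≤ volume s := by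
  simpa only [Measure.restrict_apply (measurableSet_cell _), Measure.restrict_apply_univ] using
    sum_measure_le_measure_univ (μ := volume.restrict s) (s := Finset.univ)
      (fun i _ => (measurableSet_cell (x := x) i).nullMeasurableSet)
      fun i _ j _ hij => (pairwise_disjoint_cell hx hij).aedisjoint

lemma lintegral_empMeas (x : Fin (N + 1) → ℝ) (f : ℝ → ℝ≥0∞) :
    ∫⁻ y, f y ∂(empMeas N x) = ((N : ℝ≥0∞) + 1)⁻¹ * ∑ i, f (x i) := by
  simp [empMeas]

lemma pcMeas_eq_smul_sum_cond (hx : StrictMono x) :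
    pcMeas N x = (N : ℝ≥0∞)⁻¹ • ∑ i, volume[|cell x i] := by
  rw [pcMeas, Finset.smul_sum]
  refine Finset.sum_congr rfl fun i _ => ?_
  have hN : (0 : ℝ) < N := by exact_mod_cast i.pos
  have hgap : 0 < x i.succ - x i.castSucc := sub_pos.2 (hx i.castSucc_lt_succ)
  rw [ProbabilityTheory.cond, volume_cell, smul_smul, one_div,
    ENNReal.ofReal_inv_of_pos (by positivity), ENNReal.ofReal_mul hN.le, ENNReal.ofReal_natCast,
    ENNReal.mul_inv (Or.inr (by simp)) (Or.inl (by simp)), cell]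

lemma lintegral_pcMeas (hx : StrictMono x) (f : ℝ → ℝ≥0∞) :
    ∫⁻ y, f y ∂(pcMeas N x) = (N : ℝ≥0∞)⁻¹ * ∑ i, ∫⁻ y, f y ∂volume[|cell x i] := by
  simp [pcMeas_eq_smul_sum_cond hx]

/-- The mean `N⁻¹ ∑ᵢ (x_{i+1} - x_i)^p` of the `p`-th powers of the gaps. -/
noncomputable def meanGapPow (p : ℝ) (x : Fin (N + 1) → ℝ) : ℝ≥0∞ :=
  (N : ℝ≥0∞)⁻¹ * ∑ i, volume (cell x i) ^ p

/-- The probability measure on the endpoints of the `i`-th cell that the monotone transport of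
`pcMeas N x` to `empMeas N x` assigns to the mass of this cell. -/
noncomputable def endpointMeas (x : Fin (N + 1) → ℝ) (i : Fin N) : Measure ℝ :=
  (((N - i : ℕ) : ℝ≥0∞) / (N + 1)) • Measure.dirac (x i.castSucc) +
    (((i + 1 : ℕ) : ℝ≥0∞) / (N + 1)) • Measure.dirac (x i.succ)

instance isProbabilityMeasure_endpointMeas (x : Fin (N + 1) → ℝ) (i : Fin N) :
    IsProbabilityMeasure (endpointMeas x i) := by
  have hweights : N - i + (i + 1) = N + 1 := by lia
  constructor
  simp only [endpointMeas, Measure.add_apply, Measure.smul_apply, measure_univ, smul_eq_mul,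
    mul_one]
  rw [← ENNReal.add_div, ← Nat.cast_add, hweights, ← Nat.cast_add_one]
  exact ENNReal.div_self (by simp) (by simp)

lemma ae_endpointMeas_mem (hx : StrictMono x) (i : Fin N) :
    ∀ᵐ z ∂endpointMeas x i, z ∈ Icc (x i.castSucc) (x i.succ) := by
  have hle := (hx i.castSucc_lt_succ).le
  rw [endpointMeas, ae_add_measure_iff]
  exact ⟨Measure.ae_smul_measure ((ae_dirac_iff measurableSet_Icc).2 (left_mem_Icc.2 hle)) _,
    Measure.ae_smul_measure ((ae_dirac_iff measurableSet_Icc).2 (right_mem_Icc.2 hle)) _⟩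

lemma sum_endpointMeas (x : Fin (N + 1) → ℝ) :
    ∑ i, endpointMeas x i = (N : ℝ≥0∞) • empMeas N x := by
  -- Particle `j` receives `(N - j) / (N + 1)` from its right cell, `j / (N + 1)` from its left one.
  calc ∑ i, endpointMeas x i
      = ∑ j : Fin (N + 1), (((N - j : ℕ) : ℝ≥0∞) / (N + 1)) • Measure.dirac (x j) +
          ∑ j : Fin (N + 1), ((j : ℝ≥0∞) / (N + 1)) • Measure.dirac (x j) := by
        simp only [endpointMeas, Finset.sum_add_distrib]
        rw [Fin.sum_univ_castSucc (n := N), Fin.sum_univ_succ (n := N)]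
        simp
    _ = ∑ j : Fin (N + 1), ((N : ℝ≥0∞) / (N + 1)) • Measure.dirac (x j) := by
        rw [← Finset.sum_add_distrib]
        refine Finset.sum_congr rfl fun j _ => ?_
        rw [← add_smul, ← ENNReal.add_div, ← Nat.cast_add, Nat.sub_add_cancel j.is_le]
    _ = (N : ℝ≥0∞) • empMeas N x := by
        rw [empMeas, smul_smul, Finset.smul_sum, div_eq_mul_inv]

/-- The transport plan from `pcMeas N x` to `empMeas N x` that splits each cell between its
endpoints. -/
noncomputable def endpointPlan (x : Fin (N + 1) → ℝ) : Measure (ℝ × ℝ) :=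
  (N : ℝ≥0∞)⁻¹ • ∑ i, volume[|cell x i].prod (endpointMeas x i)

lemma isCoupling_endpointPlan [NeZero N] (hx : StrictMono x) :
    IsCoupling (endpointPlan x) (pcMeas N x) (empMeas N x) := by
  have := isProbabilityMeasure_cond_cell hx
  refine ⟨⟨?_⟩, ?_, ?_⟩
  · simp [endpointPlan, ENNReal.inv_mul_cancel, NeZero.ne]
  · rw [endpointPlan, pcMeas_eq_smul_sum_cond hx, Measure.map_smul,
      Measure.map_finset_sum (by fun_prop)]
    simp
  · rw [endpointPlan, Measure.map_smul, Measure.map_finset_sum (by fun_prop)]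
    simp [sum_endpointMeas, smul_smul, ENNReal.inv_mul_cancel, NeZero.ne]

lemma transportCost_cond_cell_prod_endpointMeas_le (hp : 0 ≤ p) (hx : StrictMono x) (i : Fin N) :
    transportCost p (volume[|cell x i].prod (endpointMeas x i)) ≤ volume (cell x i) ^ p := by
  have := isProbabilityMeasure_cond_cell hx i
  refine transportCost_le_of_ae_edist_le hp ?_
  filter_upwards [Measure.quasiMeasurePreserving_fst.ae (ae_cond_mem (measurableSet_cell i)),
    Measure.quasiMeasurePreserving_snd.ae (ae_endpointMeas_mem hx i)] with q hq₁ hq₂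
  rw [edist_dist, volume_cell]
  exact ENNReal.ofReal_le_ofReal (Real.dist_le_of_mem_Icc (Ico_subset_Icc_self hq₁) hq₂)

lemma WpCost_pcMeas_empMeas_le [NeZero N] (hp : 0 ≤ p) (hx : StrictMono x) :
    WpCost p (pcMeas N x) (empMeas N x) ≤ meanGapPow p x := by
  refine (WpCost_le_transportCost hp (isCoupling_endpointPlan hx)).trans ?_
  rw [transportCost, endpointPlan, lintegral_smul_measure, lintegral_finsetSum_measure, meanGapPow,
    smul_eq_mul]
  gcongr with i
  exact transportCost_cond_cell_prod_endpointMeas_le hp hx i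

lemma meanGapPow_le_of_cellwise [NeZero N] (hp : 0 < p) (hx : Monotone x) {s : Set ℝ}
    {K : ℝ≥0∞} {τ : Fin N → ℝ≥0∞}
    (h : ∀ i, volume (cell x i) ^ p ≤ K * (volume (cell x i ∩ s) ^ p + τ i)) :
    meanGapPow p x ≤
      K * ((N : ℝ≥0∞)⁻¹ ^ min p 1 * volume s ^ p + (N : ℝ≥0∞)⁻¹ * ∑ i, τ i) := by
  have inside : (N : ℝ≥0∞)⁻¹ * ∑ i, volume (cell x i ∩ s) ^ p ≤
      (N : ℝ≥0∞)⁻¹ ^ min p 1 * volume s ^ p := by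
    simpa only [Fintype.card_fin] using mean_rpow_le_of_sum_le hp (sum_volume_cell_inter_le hx s)
  calc meanGapPow p x
      ≤ (N : ℝ≥0∞)⁻¹ * ∑ i, K * (volume (cell x i ∩ s) ^ p + τ i) := by
        rw [meanGapPow]
        gcongr with i
        exact h i
    _ = K * ((N : ℝ≥0∞)⁻¹ * ∑ i, volume (cell x i ∩ s) ^ p + (N : ℝ≥0∞)⁻¹ * ∑ i, τ i) := by
        rw [← Finset.mul_sum, Finset.sum_add_distrib]
        ring
    _ ≤ _ := by gcongr

lemma inv_mul_sum_endpoints_le [NeZero N] (x : Fin (N + 1) → ℝ) (f : ℝ → ℝ≥0∞) :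
    (N : ℝ≥0∞)⁻¹ * ∑ i : Fin N, (f (x i.castSucc) + f (x i.succ)) ≤
      4 * ∫⁻ y, f y ∂(empMeas N x) := by
  have hsum : ∑ i : Fin N, (f (x i.castSucc) + f (x i.succ)) ≤ 2 * ∑ j, f (x j) := by
    rw [Finset.sum_add_distrib, two_mul]
    gcongr
    · exact (Fin.sum_univ_castSucc fun j => f (x j)).symm ▸ le_self_add
    · exact (Fin.sum_univ_succ fun j => f (x j)).symm ▸ le_add_self
  have hinv : (N : ℝ≥0∞)⁻¹ ≤ 2 * ((N : ℝ≥0∞) + 1)⁻¹ := by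
    rw [← div_eq_mul_inv, ENNReal.le_div_iff_mul_le (by simp) (by simp), mul_add_one,
      ENNReal.inv_mul_cancel (by simp [NeZero.ne]) (by simp), ← one_add_one_eq_two]
    gcongr
    exact ENNReal.inv_le_one.2 (by exact_mod_cast NeZero.one_le)
  calc _ ≤ 2 * ((N : ℝ≥0∞) + 1)⁻¹ * (2 * ∑ j, f (x j)) := by gcongr
    _ = 4 * ∫⁻ y, f y ∂(empMeas N x) := by
      rw [lintegral_empMeas]
      ring

lemma meanGapPow_le_empMeas [NeZero N] (hp : 0 < p) (hx : Monotone x) (L : ℝ) :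
    meanGapPow p x ≤ 2 ^ p * 4 *
      ((N : ℝ≥0∞)⁻¹ ^ min p 1 * volume (Icc (-L) L) ^ p + ∫⁻ y, tailPow p L y ∂(empMeas N x)) := by
  calc meanGapPow p x
      ≤ 2 ^ p * ((N : ℝ≥0∞)⁻¹ ^ min p 1 * volume (Icc (-L) L) ^ p + (N : ℝ≥0∞)⁻¹ *
          ∑ i : Fin N, (tailPow p L (x i.castSucc) + tailPow p L (x i.succ))) :=
        meanGapPow_le_of_cellwise hp hx fun i => volume_Ico_rpow_le_endpoints hp.le L _ _
    _ ≤ 2 ^ p * (4 * ((N : ℝ≥0∞)⁻¹ ^ min p 1 * volume (Icc (-L) L) ^ p) +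
          4 * ∫⁻ y, tailPow p L y ∂(empMeas N x)) := by
        gcongr _ * (?_ + ?_)
        · exact le_mul_of_one_le_left' (by norm_num)
        · exact inv_mul_sum_endpoints_le x _
    _ = _ := by ring

lemma meanGapPow_le_pcMeas [NeZero N] (hp : 0 < p) (hx : StrictMono x) (L : ℝ) :
    meanGapPow p x ≤ 2 * 4 ^ p *
      ((N : ℝ≥0∞)⁻¹ ^ min p 1 * volume (Icc (-L) L) ^ p + ∫⁻ y, tailPow p L y ∂(pcMeas N x)) := by
  rw [lintegral_pcMeas hx]
  exact meanGapPow_le_of_cellwise hp hx.monotone fun i =>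
    volume_rpow_le_inter_add_lintegral_cond hp.le L (measurableSet_cell i)
      (volume_cell_ne_zero hx i) (volume_cell_ne_top i)

end Particles

section Limits

variable {p : ℝ} {x : (N : ℕ) → Fin (N + 1) → ℝ}

lemma EquiIntMoments.tendsto_meanGapPow (hp : 0 < p) {ν : ℕ → Measure ℝ}
    (hν : EquiIntMoments p ν) {K : ℝ≥0∞} (hK : K ≠ ⊤)
    (h : ∀ (L : ℝ) (N : ℕ) [NeZero N], meanGapPow p (x N) ≤ K *
      ((N : ℝ≥0∞)⁻¹ ^ min p 1 * volume (Icc (-L) L) ^ p + ∫⁻ y, tailPow p L y ∂(ν N))) :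
    Tendsto (fun N => meanGapPow p (x N)) atTop (𝓝 0) := by
  have hexp : 0 < min p 1 := lt_min hp one_pos
  have inside (L : ℝ) :
      Tendsto (fun N : ℕ => (N : ℝ≥0∞)⁻¹ ^ min p 1 * volume (Icc (-L) L) ^ p) atTop (𝓝 0) := by
    have hvol : volume (Icc (-L) L) ^ p ≠ ⊤ := ENNReal.rpow_ne_top_of_nonneg hp.le (by simp)
    have hpow := (ENNReal.tendsto_inv_nat_nhds_zero).ennrpow_const (min p 1)
    rw [ENNReal.zero_rpow_of_pos hexp] at hpow
    simpa using ENNReal.Tendsto.mul_const hpow (Or.inr hvol)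
  refine hν.tendsto_zero_of_le hp.le inside hK fun L => ?_
  filter_upwards [eventually_ne_atTop 0] with N hN
  have : NeZero N := ⟨hN⟩
  exact h L N

lemma tendsto_meanGapPow_of_empMeas (hp : 0 < p) (hx : ∀ N, Monotone (x N))
    (h : EquiIntMoments p fun N => empMeas N (x N)) :
    Tendsto (fun N => meanGapPow p (x N)) atTop (𝓝 0) :=
  h.tendsto_meanGapPow hp
    (ENNReal.mul_ne_top (ENNReal.rpow_ne_top_of_nonneg hp.le (by simp)) (by simp))
    fun L N _ => meanGapPow_le_empMeas hp (hx N) L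

lemma tendsto_meanGapPow_of_pcMeas (hp : 0 < p) (hx : ∀ N, StrictMono (x N))
    (h : EquiIntMoments p fun N => pcMeas N (x N)) :
    Tendsto (fun N => meanGapPow p (x N)) atTop (𝓝 0) :=
  h.tendsto_meanGapPow hp
    (ENNReal.mul_ne_top (by simp) (ENNReal.rpow_ne_top_of_nonneg hp.le (by simp)))
    fun L N _ => meanGapPow_le_pcMeas hp (hx N) L

lemma tendsto_WpCost_pcMeas_empMeas (hp : 0 ≤ p) (hx : ∀ N, StrictMono (x N))
    (h : Tendsto (fun N => meanGapPow p (x N)) atTop (𝓝 0)) :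
    Tendsto (fun N => WpCost p (pcMeas N (x N)) (empMeas N (x N))) atTop (𝓝 0) := by
  refine tendsto_of_tendsto_of_tendsto_of_le_of_le' tendsto_const_nhds h
    (Eventually.of_forall fun _ => zero_le) ?_
  filter_upwards [eventually_ne_atTop 0] with N hN
  have : NeZero N := ⟨hN⟩
  exact WpCost_pcMeas_empMeas_le hp (hx N)

end Limits

theorem emp_pc_equiintegrable_and_Wp_general {p : ℝ} (hp : 0 < p)
    {x : (N : ℕ) → Fin (N + 1) → ℝ} (hx : ∀ N, StrictMono (x N)) :
    (EquiIntMoments p (fun N => empMeas N (x N))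
      ↔ EquiIntMoments p (fun N => pcMeas N (x N))) ∧
    (∀ μ : Measure ℝ, IsProbabilityMeasure μ →
      (∫⁻ y, ENNReal.ofReal (|y| ^ p) ∂μ) < ⊤ →
      (Tendsto (fun N => WpCost p (empMeas N (x N)) μ) atTop (𝓝 0)
        ↔ Tendsto (fun N => WpCost p (pcMeas N (x N)) μ) atTop (𝓝 0))) := by
  have cost_of_emp (h : EquiIntMoments p fun N => empMeas N (x N)) :
      Tendsto (fun N => WpCost p (pcMeas N (x N)) (empMeas N (x N))) atTop (𝓝 0) :=
    tendsto_WpCost_pcMeas_empMeas hp.le hx <|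
      tendsto_meanGapPow_of_empMeas hp (fun N => (hx N).monotone) h
  have cost_of_pc (h : EquiIntMoments p fun N => pcMeas N (x N)) :
      Tendsto (fun N => WpCost p (empMeas N (x N)) (pcMeas N (x N))) atTop (𝓝 0) := by
    simpa only [WpCost_comm hp.le] using
      tendsto_WpCost_pcMeas_empMeas hp.le hx (tendsto_meanGapPow_of_pcMeas hp hx h)
  refine ⟨⟨fun h => h.of_tendsto_WpCost hp.le (cost_of_emp h),
    fun h => h.of_tendsto_WpCost hp.le (cost_of_pc h)⟩, fun μ _ hμ => ?_⟩
  simp only [ofReal_abs_rpow hp.le] at hμ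
  have hconst : EquiIntMoments p fun _ => μ := equiIntMoments_const hp.le hμ.ne
  exact ⟨fun h => tendsto_WpCost_trans hp.le (cost_of_emp (hconst.of_tendsto_WpCost hp.le h)) h,
    fun h => tendsto_WpCost_trans hp.le (cost_of_pc (hconst.of_tendsto_WpCost hp.le h)) h⟩

/-- the `p`-th moments of the empirical measures are equi-integrable iff
those of the piecewise-constant measures are; consequently, for `μ ∈ 𝒫_p(ℝ)`,
`W_p(μ̂^N, μ) → 0` iff `W_p(μ^N, μ) → 0`. -/
theorem emp_pc_equiintegrable_and_Wp (p M : ℝ) (hp : 1 ≤ p) (hM : 0 < M)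
    (x : (N : ℕ) → Fin (N+1) → ℝ) (hx : ∀ N, InCone N M (x N)) :
    (EquiIntMoments p (fun N => empMeas N (x N))
      ↔ EquiIntMoments p (fun N => pcMeas N (x N))) ∧
    (∀ μ : Measure ℝ, IsProbabilityMeasure μ →
      (∫⁻ y, ENNReal.ofReal (|y| ^ p) ∂μ) < ⊤ →
      (Tendsto (fun N => WpCost p (empMeas N (x N)) μ) atTop (𝓝 0)
        ↔ Tendsto (fun N => WpCost p (pcMeas N (x N)) μ) atTop (𝓝 0))) :=
  emp_pc_equiintegrable_and_Wp_general (zero_lt_one.trans_le hp) fun N => (hx N).strictMono hM
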